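/- Let L ≥ 1, a < b with b − a ≥ 1, k ≥ 1 an integer and r > 0. For each odd n ≥ 3 and S ∈ Σ_L let λ̃ be the Pinsker weight sequence with parameter t = t̃_n(S), let ι̃_0 be its index j_0, and set ϖ_j = Σ_{i=0}^k (2π⌊j/2⌋/(b−a))^{2i}. Define υ_n(S) = n^{2k/(2k+1)} · sup_{j ≥ ι̃_0} (1 − λ̃(j))²/ϖ_j and υ*(S) = ((b−a)/π)^{2k} · (A_k · r/J(S))^{−2k/(2k+1)}. Then limsup_{n→∞, n odd} sup_{S ∈ Σ_L} υ_n(S)/υ*(S) ≤ 1. -/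

import Mathlib

open MeasureTheory Real Set Filter

noncomputable section

/-- `f` is Lipschitz with constant `L` and continuous. -/
def IsLip (L : ℝ) (f : ℝ → ℝ) : Prop :=
  Continuous f ∧ ∀ x y : ℝ, |f x - f y| ≤ L * |x - y|

/-- The functional class `Σ_L`. -/
def SigmaL (L : ℝ) (S : ℝ → ℝ) : Prop :=
  IsLip L S ∧ (∀ z : ℝ, |z| ≤ L → |S z| ≤ L) ∧
  ∃ S' : ℝ → ℝ, ContinuousOn S' {x : ℝ | L ≤ |x|} ∧
    ∀ x : ℝ, L ≤ |x| → HasDerivAt S (S' x) x ∧ -L ≤ S' x ∧ S' x ≤ -(1/L)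

/-- Normalizing constant of the ergodic density. -/
def qdenom (S : ℝ → ℝ) : ℝ := ∫ y : ℝ, Real.exp (2 * ∫ z in (0:ℝ)..y, S z)

/-- The ergodic density `q_S`. -/
def qdens (S : ℝ → ℝ) (x : ℝ) : ℝ :=
  Real.exp (2 * ∫ z in (0:ℝ)..x, S z) / qdenom S

/-- `J(S) = ∫_a^b 1/q_S(u) du`. -/
def Jfun (a b : ℝ) (S : ℝ → ℝ) : ℝ := ∫ u in a..b, 1 / qdens S u

end

noncomputable section

/-- `ε_n = 1 / ln n`. -/
def epsn (n : ℕ) : ℝ := 1 / Real.log n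

/-- `t̃_n(S) = ε_n · min{ i ≥ 1 : i ε_n ≥ r/J(S) }`. -/
def ttilde (a b r : ℝ) (n : ℕ) (S : ℝ → ℝ) : ℝ :=
  epsn n * (sInf {i : ℕ | 1 ≤ i ∧ r / Jfun a b S ≤ (i : ℝ) * epsn n} : ℕ)

/-- `A_k = (b−a)^{2k+1}(k+1)(2k+1)/(π^{2k} k)`. -/
def Ak (a b : ℝ) (k : ℕ) : ℝ :=
  (b - a) ^ (2 * k + 1) * ((k : ℝ) + 1) * (2 * (k : ℝ) + 1) / (Real.pi ^ (2 * k) * k)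

/-- `ω = (A_k t n)^{1/(2k+1)}`. -/
def pinskerOmega (a b : ℝ) (k : ℕ) (t : ℝ) (n : ℕ) : ℝ :=
  (Ak a b k * t * n) ^ ((1 : ℝ) / (2 * k + 1))

/-- `j_0 = ⌊ω / ln(n+2)⌋ + 1`. -/
def pinskerJ0 (a b : ℝ) (k : ℕ) (t : ℝ) (n : ℕ) : ℕ :=
  ⌊pinskerOmega a b k t n / Real.log (n + 2)⌋₊ + 1

/-- The Pinsker weights: `λ(j) = 1` for `j ≤ j_0`,
`λ(j) = (1 − (j/ω)^k)₊` for `j_0 < j ≤ n`, and `λ(j) = 0` for `j > n`. -/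
def pinskerWeight (a b : ℝ) (k : ℕ) (t : ℝ) (n : ℕ) (j : ℕ) : ℝ :=
  if j ≤ pinskerJ0 a b k t n then 1
  else if j ≤ n then max 0 (1 - ((j : ℝ) / pinskerOmega a b k t n) ^ k)
  else 0

end

noncomputable section

/-- `ϖ_j = Σ_{i=0}^k (2π⌊j/2⌋/(b−a))^{2i}` (with `0^0 = 1`). -/
def varpi (a b : ℝ) (k : ℕ) (j : ℕ) : ℝ :=
  ∑ i ∈ Finset.range (k + 1), (2 * Real.pi * ((j / 2 : ℕ) : ℝ) / (b - a)) ^ (2 * i)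

/-- `υ_n(S) = n^{2k/(2k+1)} sup_{j ≥ ι̃_0} (1−λ̃(j))²/ϖ_j`. -/
def upsn (a b : ℝ) (k : ℕ) (r : ℝ) (n : ℕ) (S : ℝ → ℝ) : ℝ :=
  (n : ℝ) ^ ((2 * (k : ℝ)) / (2 * k + 1)) *
    ⨆ j : {j : ℕ // pinskerJ0 a b k (ttilde a b r n S) n ≤ j},
      (1 - pinskerWeight a b k (ttilde a b r n S) n j) ^ 2 / varpi a b k j

/-- `υ*(S) = ((b−a)/π)^{2k} (A_k r/J(S))^{−2k/(2k+1)}`. -/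
def upsstar (a b : ℝ) (k : ℕ) (r : ℝ) (S : ℝ → ℝ) : ℝ :=
  ((b - a) / Real.pi) ^ (2 * k) *
    (Ak a b k * (r / Jfun a b S)) ^ (-(2 * (k : ℝ)) / (2 * k + 1))

end

/-!
Since `S' ≤ -1/L` far out, every drift of `Σ_L` is dissipative with the same constants, so its
Gibbs weight is dominated by one Gaussian and `J(S)` is bounded below uniformly over `Σ_L`. Hence
`t̃_n(S)` lies in a fixed interval `[ε_n, T]`, and the bandwidth `ω` and cutoff `j₀` satisfy
`ω ≤ n` and `j₀ → ∞` uniformly. Beyond the cutoff `1 - λ(j) ≤ (j/ω)^k`, while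
`ϖ_j ≥ (π(j-1)/(b-a))^{2k}` and `j/(j-1) ≤ 1 + 1/j₀`, which gives the non-asymptotic bound
`υ_n(S) ≤ (1 + 1/j₀)^{2k} υ*(S)`.
-/

open scoped Topology

section Dissipative

variable {S : ℝ → ℝ} {C c : ℝ}

/-- The drift `S` is dissipative: `x S(x) ≤ C |x| - c x²`. This symmetric form treats both tails of
the diffusion at once and controls the potential `∫₀^y S`. -/
def IsDissipative (C c : ℝ) (S : ℝ → ℝ) : Prop :=
  ∀ x, x * S x ≤ C * |x| - c * x ^ 2

/-- The Gibbs weight `exp (2 ∫₀^y S)`, i.e. the ergodic density `q_S` before normalization. -/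
noncomputable def gibbsWeight (S : ℝ → ℝ) (y : ℝ) : ℝ :=
  Real.exp (2 * ∫ z in (0:ℝ)..y, S z)

theorem gibbsWeight_pos (S : ℝ → ℝ) (y : ℝ) : 0 < gibbsWeight S y :=
  Real.exp_pos _

theorem continuous_gibbsWeight (hS : Continuous S) : Continuous (gibbsWeight S) :=
  Real.continuous_exp.comp <| continuous_const.mul <|
    intervalIntegral.continuous_primitive (fun x y => hS.intervalIntegrable x y) 0

theorem IsDissipative.integral_le (h : IsDissipative C c S) (hS : Continuous S) (y : ℝ) :
    ∫ z in (0:ℝ)..y, S z ≤ C * |y| - c * y ^ 2 / 2 := by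
  have rescale : ∫ z in (0:ℝ)..y, S z = ∫ s in (0:ℝ)..1, y * S (y * s) := by
    rw [intervalIntegral.integral_const_mul, intervalIntegral.mul_integral_comp_mul_left,
      mul_zero, mul_one]
  have pointwise : ∀ s ∈ Ioo (0:ℝ) 1, y * S (y * s) ≤ C * |y| - c * y ^ 2 * s := by
    intro s ⟨hs, _⟩
    have hys := h (y * s)
    rw [abs_mul, abs_of_pos hs] at hys
    refine le_of_mul_le_mul_right ?_ hs
    linarith
  calc ∫ z in (0:ℝ)..y, S z
      = ∫ s in (0:ℝ)..1, y * S (y * s) := rescale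
    _ ≤ ∫ s in (0:ℝ)..1, (C * |y| - c * y ^ 2 * s) :=
        intervalIntegral.integral_mono_on_of_le_Ioo zero_le_one
          ((by fun_prop : Continuous fun s => y * S (y * s)).intervalIntegrable _ _)
          ((by fun_prop : Continuous fun s => C * |y| - c * y ^ 2 * s).intervalIntegrable _ _)
          pointwise
    _ = C * |y| - c * y ^ 2 / 2 := by
        rw [intervalIntegral.integral_sub intervalIntegrable_const
            (intervalIntegral.intervalIntegrable_id.const_mul _),
          intervalIntegral.integral_const, intervalIntegral.integral_const_mul, integral_id,
          smul_eq_mul]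
        ring

theorem IsDissipative.gibbsWeight_le (h : IsDissipative C c S) (hS : Continuous S) (hc : 0 < c)
    (y : ℝ) : gibbsWeight S y ≤ Real.exp (2 * C ^ 2 / c) * Real.exp (-(c / 2) * y ^ 2) := by
  rw [gibbsWeight, ← Real.exp_add, Real.exp_le_exp]
  have complete_square :
      2 * C ^ 2 / c + -(c / 2) * y ^ 2 - 2 * (C * |y| - c * y ^ 2 / 2) =
        (c * |y| - 2 * C) ^ 2 / (2 * c) := by
    field_simp
    rw [← sq_abs y]
    ring
  have : 0 ≤ (c * |y| - 2 * C) ^ 2 / (2 * c) := by positivity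
  linarith [h.integral_le hS y]

theorem IsDissipative.gibbsWeight_le_exp (h : IsDissipative C c S) (hS : Continuous S)
    (hc : 0 < c) (y : ℝ) : gibbsWeight S y ≤ Real.exp (2 * C ^ 2 / c) := by
  refine (h.gibbsWeight_le hS hc y).trans (mul_le_of_le_one_right (Real.exp_pos _).le ?_)
  rw [Real.exp_le_one_iff, neg_mul, neg_nonpos]
  positivity

theorem IsDissipative.integrable_gibbsWeight (h : IsDissipative C c S) (hS : Continuous S)
    (hc : 0 < c) : Integrable (gibbsWeight S) := by
  refine ((integrable_exp_neg_mul_sq (half_pos hc)).const_mul (Real.exp (2 * C ^ 2 / c))).mono'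
    (continuous_gibbsWeight hS).aestronglyMeasurable (ae_of_all _ fun y => ?_)
  rw [Real.norm_of_nonneg (gibbsWeight_pos S y).le]
  exact h.gibbsWeight_le hS hc y

end Dissipative

namespace SigmaL

variable {L : ℝ} {S : ℝ → ℝ}

theorem continuous (hS : SigmaL L S) : Continuous S :=
  hS.1.1

theorem abs_apply_le (hS : SigmaL L S) (hL : 0 ≤ L) (z : ℝ) : |S z| ≤ L * (1 + |z|) := by
  have h_zero : |S 0| ≤ L := hS.2.1 0 (by rwa [abs_zero])
  have h_lip : |S z - S 0| ≤ L * |z| := by simpa only [sub_zero] using hS.1.2 z 0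
  linarith [abs_sub_abs_le_abs_sub (S z) (S 0)]

theorem sub_le_of_convex (hS : SigmaL L S) {D : Set ℝ} (hD : Convex ℝ D)
    (hDL : ∀ x ∈ D, L ≤ |x|) {x y : ℝ} (hx : x ∈ D) (hy : y ∈ D) (hxy : x ≤ y) :
    S y - S x ≤ -(1 / L) * (y - x) := by
  obtain ⟨-, -, S', -, hS'⟩ := hS
  have hderiv : ∀ z ∈ D, HasDerivAt S (S' z) z := fun z hz => (hS' z (hDL z hz)).1
  refine hD.image_sub_le_mul_sub_of_deriv_le
    (fun z hz => (hderiv z hz).continuousAt.continuousWithinAt)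
    (fun z hz => (hderiv z (interior_subset hz)).differentiableAt.differentiableWithinAt)
    (fun z hz => ?_) x hx y hy hxy
  rw [(hderiv z (interior_subset hz)).deriv]
  exact (hS' z (hDL z (interior_subset hz))).2.2

theorem isDissipative (hS : SigmaL L S) (hL : 0 < L) : IsDissipative (L + 1) (1 / L) S := by
  intro x
  have cancel : 1 / L * L = 1 := one_div_mul_cancel hL.ne'
  rcases le_total |x| L with hx | hx
  · have sq_le : 1 / L * x ^ 2 ≤ |x| := by
      rw [one_div_mul_eq_div, div_le_iff₀ hL, ← sq_abs, sq]
      gcongr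
    calc x * S x ≤ |x| * |S x| := (le_abs_self _).trans (abs_mul _ _).le
      _ ≤ |x| * L := by gcongr; exact hS.2.1 x hx
      _ ≤ (L + 1) * |x| - 1 / L * x ^ 2 := by linarith
  rcases le_abs'.1 hx with hx | hx
  · have h := hS.sub_le_of_convex (convex_Iic (-L))
      (fun z hz => le_abs'.2 (.inl hz)) hx self_mem_Iic hx
    have neg_le_left : -L ≤ S (-L) :=
      neg_le_of_abs_le (hS.2.1 (-L) (by rw [abs_neg, abs_of_pos hL]))
    have le_drift : -(L + 1) - 1 / L * x ≤ S x := by linarith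
    have x_nonpos : x ≤ 0 := by linarith
    rw [abs_of_nonpos x_nonpos]
    linarith [mul_le_mul_of_nonpos_left le_drift x_nonpos]
  · have h := hS.sub_le_of_convex (convex_Ici L)
      (fun z hz => le_abs'.2 (.inr hz)) self_mem_Ici hx hx
    have right_le : S L ≤ L := le_of_abs_le (hS.2.1 L (abs_of_pos hL).le)
    have drift_le : S x ≤ L + 1 - 1 / L * x := by linarith
    have x_nonneg : 0 ≤ x := by linarith
    rw [abs_of_nonneg x_nonneg]
    linarith [mul_le_mul_of_nonneg_left drift_le x_nonneg]

theorem integrable_gibbsWeight (hS : SigmaL L S) (hL : 0 < L) : Integrable (gibbsWeight S) :=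
  (hS.isDissipative hL).integrable_gibbsWeight hS.continuous (one_div_pos.2 hL)

theorem gibbsWeight_le (hS : SigmaL L S) (hL : 0 < L) (y : ℝ) :
    gibbsWeight S y ≤ Real.exp (2 * L * (L + 1) ^ 2) := by
  convert (hS.isDissipative hL).gibbsWeight_le_exp hS.continuous (one_div_pos.2 hL) y using 2
  field_simp

theorem le_gibbsWeight (hS : SigmaL L S) (hL : 0 ≤ L) {y : ℝ} (hy : |y| ≤ 1) :
    Real.exp (-(4 * L)) ≤ gibbsWeight S y := by
  have drift_le : ∀ z ∈ Set.uIoc 0 y, ‖S z‖ ≤ 2 * L := by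
    intro z hz
    have hzy : |z| ≤ |y| := by
      simpa only [sub_zero] using Set.abs_sub_left_of_mem_uIcc (Set.uIoc_subset_uIcc hz)
    calc |S z| ≤ L * (1 + |z|) := hS.abs_apply_le hL z
      _ ≤ L * (1 + 1) := by gcongr; exact hzy.trans hy
      _ = 2 * L := by ring
  have potential_le : |∫ z in (0:ℝ)..y, S z| ≤ 2 * L := by
    calc |∫ z in (0:ℝ)..y, S z| ≤ 2 * L * |y - 0| :=
          intervalIntegral.norm_integral_le_of_norm_le_const drift_le
      _ ≤ 2 * L := by
          rw [sub_zero]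
          exact mul_le_of_le_one_right (by positivity) hy
  rw [gibbsWeight, Real.exp_le_exp]
  linarith [neg_le_of_abs_le potential_le]

theorem le_qdenom (hS : SigmaL L S) (hL : 0 < L) : Real.exp (-(4 * L)) ≤ qdenom S := by
  have hint := hS.integrable_gibbsWeight hL
  calc Real.exp (-(4 * L)) = Real.exp (-(4 * L)) * volume.real (Icc (0:ℝ) 1) := by simp
    _ ≤ ∫ y in Icc (0:ℝ) 1, gibbsWeight S y :=
        setIntegral_ge_of_const_le_real measurableSet_Icc (by simp)
          (fun y hy => hS.le_gibbsWeight hL.le (abs_le.2 ⟨by linarith [hy.1], hy.2⟩))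
          hint.integrableOn
    _ ≤ qdenom S :=
        setIntegral_le_integral hint (ae_of_all _ fun y => (gibbsWeight_pos S y).le)

theorem le_Jfun (hS : SigmaL L S) (hL : 0 < L) {a b : ℝ} (hab : a ≤ b) :
    (b - a) * (Real.exp (-(4 * L)) / Real.exp (2 * L * (L + 1) ^ 2)) ≤ Jfun a b S := by
  have inv_qdens : ∀ u, 1 / qdens S u = qdenom S / gibbsWeight S u := fun u => one_div_div _ _
  simp only [Jfun, inv_qdens]
  rw [← smul_eq_mul, ← intervalIntegral.integral_const]
  refine intervalIntegral.integral_mono_on hab (by simp)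
    (Continuous.intervalIntegrable (continuous_const.div (continuous_gibbsWeight hS.continuous)
      fun u => (gibbsWeight_pos S u).ne') _ _) fun u _ => ?_
  have := gibbsWeight_pos S u
  gcongr
  · exact ((Real.exp_pos _).trans_le (hS.le_qdenom hL)).le
  · exact hS.le_qdenom hL
  · exact hS.gibbsWeight_le hL u

end SigmaL

section Quantization

variable {a b r : ℝ} {n : ℕ} {S : ℝ → ℝ}

theorem epsn_pos (hn : 1 < n) : 0 < epsn n :=
  one_div_pos.2 (Real.log_pos (by exact_mod_cast hn))

theorem tendsto_epsn : Tendsto epsn atTop (𝓝 0) := by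
  refine (Real.tendsto_log_atTop.comp tendsto_natCast_atTop_atTop).inv_tendsto_atTop.congr
    fun n => ?_
  exact (one_div (Real.log n)).symm

theorem ttilde_eq_mul_ceil (hn : 1 < n) (hJ : 0 < r / Jfun a b S) :
    ttilde a b r n S = epsn n * ⌈r / Jfun a b S / epsn n⌉₊ := by
  have hε := epsn_pos hn
  have hleast : IsLeast {i : ℕ | 1 ≤ i ∧ r / Jfun a b S ≤ i * epsn n}
      ⌈r / Jfun a b S / epsn n⌉₊ :=
    ⟨⟨Nat.ceil_pos.2 (div_pos hJ hε), (div_le_iff₀ hε).1 (Nat.le_ceil _)⟩,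
      fun i hi => Nat.ceil_le.2 ((div_le_iff₀ hε).2 hi.2)⟩
  rw [ttilde, hleast.csInf_eq]

theorem div_Jfun_le_ttilde (hn : 1 < n) (hJ : 0 < r / Jfun a b S) :
    r / Jfun a b S ≤ ttilde a b r n S := by
  rw [ttilde_eq_mul_ceil hn hJ, ← div_le_iff₀' (epsn_pos hn)]
  exact Nat.le_ceil _

theorem epsn_le_ttilde (hn : 1 < n) (hJ : 0 < r / Jfun a b S) : epsn n ≤ ttilde a b r n S := by
  have hε := epsn_pos hn
  rw [ttilde_eq_mul_ceil hn hJ]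
  exact le_mul_of_one_le_right hε.le (by exact_mod_cast Nat.ceil_pos.2 (div_pos hJ hε))

theorem ttilde_le_add (hn : 1 < n) (hJ : 0 < r / Jfun a b S) :
    ttilde a b r n S ≤ r / Jfun a b S + epsn n := by
  have hε := epsn_pos hn
  calc ttilde a b r n S = epsn n * ⌈r / Jfun a b S / epsn n⌉₊ := ttilde_eq_mul_ceil hn hJ
    _ ≤ epsn n * (r / Jfun a b S / epsn n + 1) := by
        gcongr
        exact (Nat.ceil_lt_add_one (div_pos hJ hε).le).le
    _ = r / Jfun a b S + epsn n := by field_simp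

end Quantization

section Pinsker

variable {a b t : ℝ} {k n j : ℕ}

theorem Ak_pos (hab : a < b) (hk : 0 < k) : 0 < Ak a b k := by
  have : 0 < b - a := sub_pos.2 hab
  unfold Ak
  positivity

theorem pinskerOmega_pos (hab : a < b) (hk : 0 < k) (ht : 0 < t) (hn : 0 < n) :
    0 < pinskerOmega a b k t n := by
  have := Ak_pos hab hk
  unfold pinskerOmega
  positivity

theorem pinskerOmega_pow_two_mul (h : 0 ≤ Ak a b k * t * n) :
    pinskerOmega a b k t n ^ (2 * k) = (Ak a b k * t * n) ^ (2 * (k : ℝ) / (2 * k + 1)) := by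
  rw [pinskerOmega, ← Real.rpow_natCast, ← Real.rpow_mul h]
  congr 1
  push_cast
  ring

theorem pinskerOmega_mono (hab : a < b) (hk : 0 < k) {t₁ t₂ : ℝ} (ht₁ : 0 ≤ t₁) (h : t₁ ≤ t₂) :
    pinskerOmega a b k t₁ n ≤ pinskerOmega a b k t₂ n := by
  have := Ak_pos hab hk
  unfold pinskerOmega
  gcongr

theorem pinskerJ0_mono (hab : a < b) (hk : 0 < k) {t₁ t₂ : ℝ} (ht₁ : 0 ≤ t₁) (h : t₁ ≤ t₂) :
    pinskerJ0 a b k t₁ n ≤ pinskerJ0 a b k t₂ n := by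
  have : 0 ≤ Real.log (n + 2) := Real.log_nonneg (by linarith [n.cast_nonneg (α := ℝ)])
  unfold pinskerJ0
  gcongr
  exact pinskerOmega_mono hab hk ht₁ h

theorem pinskerWeight_le_one (hω : 0 < pinskerOmega a b k t n) :
    pinskerWeight a b k t n j ≤ 1 := by
  have : 0 ≤ ((j : ℝ) / pinskerOmega a b k t n) ^ k := by positivity
  unfold pinskerWeight
  split_ifs
  · exact le_rfl
  · exact max_le zero_le_one (by linarith)
  · exact zero_le_one

theorem one_sub_pinskerWeight_le (hω : 0 < pinskerOmega a b k t n)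
    (hωn : pinskerOmega a b k t n ≤ n) :
    1 - pinskerWeight a b k t n j ≤ (j / pinskerOmega a b k t n) ^ k := by
  unfold pinskerWeight
  split_ifs with hj hjn
  · rw [sub_self]
    positivity
  · linarith [le_max_right 0 (1 - ((j : ℝ) / pinskerOmega a b k t n) ^ k)]
  · rw [sub_zero]
    have hnj : (n : ℝ) ≤ j := by exact_mod_cast (not_le.1 hjn).le
    exact one_le_pow₀ ((one_le_div hω).2 (hωn.trans hnj))

theorem le_varpi (hab : a < b) (hj : 1 ≤ j) :
    (Real.pi * (j - 1) / (b - a)) ^ (2 * k) ≤ varpi a b k j := by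
  have : 0 < b - a := sub_pos.2 hab
  have hj' : (0 : ℝ) ≤ j - 1 := sub_nonneg.2 (by exact_mod_cast hj)
  have sub_one_le : (j : ℝ) - 1 ≤ 2 * (j / 2 : ℕ) := by
    rw [sub_le_iff_le_add]
    exact_mod_cast (by omega : j ≤ 2 * (j / 2) + 1)
  calc (Real.pi * (j - 1) / (b - a)) ^ (2 * k)
      ≤ (Real.pi * (2 * (j / 2 : ℕ)) / (b - a)) ^ (2 * k) := by gcongr
    _ = (2 * Real.pi * (j / 2 : ℕ) / (b - a)) ^ (2 * k) := by ring
    _ ≤ varpi a b k j :=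
        Finset.single_le_sum
          (f := fun i => (2 * Real.pi * ((j / 2 : ℕ) : ℝ) / (b - a)) ^ (2 * i))
          (fun i _ => by positivity) (Finset.self_mem_range_succ k)

theorem sq_one_sub_pinskerWeight_div_varpi_le (hab : a < b) (hω : 0 < pinskerOmega a b k t n)
    (hωn : pinskerOmega a b k t n ≤ n) (hj : pinskerJ0 a b k t n ≤ j) :
    (1 - pinskerWeight a b k t n j) ^ 2 / varpi a b k j ≤
      (1 + 1 / (pinskerJ0 a b k t n : ℝ)) ^ (2 * k) * ((b - a) / Real.pi) ^ (2 * k) /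
        pinskerOmega a b k t n ^ (2 * k) := by
  have : 0 < b - a := sub_pos.2 hab
  rcases hj.eq_or_lt with rfl | hj
  · rw [pinskerWeight, if_pos le_rfl, sub_self, zero_pow two_ne_zero, zero_div]
    positivity
  have hm : 0 < (pinskerJ0 a b k t n : ℝ) := by exact_mod_cast Nat.succ_pos _
  have hmj : (pinskerJ0 a b k t n : ℝ) ≤ j - 1 := by
    rw [le_sub_iff_add_le]
    exact_mod_cast hj
  have hj_pos : 0 < (j : ℝ) - 1 := hm.trans_le hmj
  have numerator_le :
      (1 - pinskerWeight a b k t n j) ^ 2 ≤ (j / pinskerOmega a b k t n) ^ (2 * k) := by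
    rw [mul_comm 2 k, pow_mul]
    exact pow_le_pow_left₀ (sub_nonneg.2 (pinskerWeight_le_one hω))
      (one_sub_pinskerWeight_le hω hωn) 2
  calc (1 - pinskerWeight a b k t n j) ^ 2 / varpi a b k j
      ≤ (j / pinskerOmega a b k t n) ^ (2 * k) / (Real.pi * (j - 1) / (b - a)) ^ (2 * k) := by
        gcongr
        exact le_varpi hab (by omega)
    _ = (1 + 1 / ((j : ℝ) - 1)) ^ (2 * k) * ((b - a) / Real.pi) ^ (2 * k) /
          pinskerOmega a b k t n ^ (2 * k) := by
        rw [← div_pow, ← mul_pow, ← div_pow]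
        congr 1
        field_simp
        ring
    _ ≤ _ := by gcongr

end Pinsker

section Asymptotics

variable {a b : ℝ} {k : ℕ}

theorem tendsto_id_div_log_pow_atTop (m : ℕ) :
    Tendsto (fun x : ℝ => x / Real.log x ^ m) atTop atTop := by
  have h_zero : Tendsto (fun x : ℝ => Real.log x ^ m / x) atTop (𝓝 0) := by
    simpa only [one_mul, add_zero] using
      Real.tendsto_pow_log_div_mul_add_atTop 1 0 m one_ne_zero
  have h_pos : ∀ᶠ x : ℝ in atTop, 0 < Real.log x ^ m / x := by
    filter_upwards [eventually_gt_atTop 1] with x hx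
    have := Real.log_pos hx
    positivity
  exact (tendsto_nhdsWithin_iff.2 ⟨h_zero, h_pos⟩).inv_tendsto_nhdsGT_zero.congr
    fun x => inv_div _ _

theorem pinskerOmega_epsn_div_log (hab : a < b) (hk : 0 < k) {n : ℕ} (hn : 1 < n) :
    pinskerOmega a b k (epsn n) n / Real.log n =
      (Ak a b k * (n / Real.log n ^ (2 * k + 2))) ^ ((1 : ℝ) / (2 * k + 1)) := by
  have hA := Ak_pos hab hk
  have hlog : 0 < Real.log n := Real.log_pos (by exact_mod_cast hn)
  have root_pow : Real.log n = (Real.log n ^ (2 * k + 1)) ^ ((1 : ℝ) / (2 * k + 1)) := by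
    rw [one_div]
    exact_mod_cast (Real.pow_rpow_inv_natCast hlog.le (2 * k).succ_ne_zero).symm
  rw [pinskerOmega, epsn]
  nth_rw 2 [root_pow]
  rw [← Real.div_rpow (by positivity) (by positivity)]
  congr 1
  field_simp
  ring

theorem tendsto_pinskerOmega_epsn_div_log (hab : a < b) (hk : 0 < k) :
    Tendsto (fun n : ℕ => pinskerOmega a b k (epsn n) n / Real.log n) atTop atTop := by
  have h_arg : Tendsto (fun n : ℕ => Ak a b k * (n / Real.log n ^ (2 * k + 2))) atTop atTop :=
    ((tendsto_id_div_log_pow_atTop _).comp tendsto_natCast_atTop_atTop).const_mul_atTop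
      (Ak_pos hab hk)
  have h_exp : (0 : ℝ) < 1 / (2 * k + 1) := by positivity
  refine ((tendsto_rpow_atTop h_exp).comp h_arg).congr' ?_
  filter_upwards [eventually_gt_atTop 1] with n hn
  exact (pinskerOmega_epsn_div_log hab hk hn).symm

theorem log_natCast_add_two_le {n : ℕ} (hn : 2 ≤ n) :
    Real.log (n + 2) ≤ 2 * Real.log n := by
  have hn' : (2 : ℝ) ≤ n := by exact_mod_cast hn
  calc Real.log (n + 2) ≤ Real.log ((n : ℝ) ^ 2) :=
        Real.log_le_log (by positivity) (by nlinarith)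
    _ = 2 * Real.log n := by rw [Real.log_pow, Nat.cast_ofNat]

theorem tendsto_pinskerJ0_epsn (hab : a < b) (hk : 0 < k) :
    Tendsto (fun n : ℕ => pinskerJ0 a b k (epsn n) n) atTop atTop := by
  rw [← tendsto_natCast_atTop_iff (R := ℝ)]
  refine tendsto_atTop_mono' _ ?_
    ((tendsto_pinskerOmega_epsn_div_log hab hk).atTop_div_const two_pos)
  filter_upwards [eventually_ge_atTop 2] with n hn
  have hω := pinskerOmega_pos hab hk (epsn_pos hn) (zero_lt_two.trans_le hn)
  have hlog : 0 < Real.log ((n : ℝ) + 2) := Real.log_pos (by linarith [n.cast_nonneg (α := ℝ)])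
  calc pinskerOmega a b k (epsn n) n / Real.log n / 2
      = pinskerOmega a b k (epsn n) n / (2 * Real.log n) := by rw [div_div, mul_comm]
    _ ≤ pinskerOmega a b k (epsn n) n / Real.log (n + 2) := by
        gcongr
        exact log_natCast_add_two_le hn
    _ ≤ pinskerJ0 a b k (epsn n) n := by
        rw [pinskerJ0]
        exact_mod_cast (Nat.lt_floor_add_one _).le

theorem eventually_forall_pinskerOmega_le (hab : a < b) (hk : 0 < k) (T : ℝ) :
    ∀ᶠ n : ℕ in atTop, ∀ t, 0 ≤ t → t ≤ T → pinskerOmega a b k t n ≤ n := by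
  have hA := Ak_pos hab hk
  filter_upwards [eventually_ge_atTop 1,
    tendsto_natCast_atTop_atTop.eventually_ge_atTop (Ak a b k * T)] with n hn hAT t ht htT
  have hn' : (1 : ℝ) ≤ n := by exact_mod_cast hn
  rw [pinskerOmega, one_div, Real.rpow_inv_le_iff_of_pos (by positivity) (by positivity)
    (by positivity)]
  calc Ak a b k * t * n ≤ Ak a b k * T * n := by gcongr
    _ ≤ n * n := by gcongr
    _ = (n : ℝ) ^ (2 : ℝ) := by rw [Real.rpow_two, sq]
    _ ≤ (n : ℝ) ^ (2 * (k : ℝ) + 1) := by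
        have : (1 : ℝ) ≤ k := by exact_mod_cast hk
        exact Real.rpow_le_rpow_of_exponent_le hn' (by linarith)

theorem eventually_one_add_one_div_pow_le {y : ℝ} (hy : 1 < y) (p : ℕ) :
    ∀ᶠ m : ℕ in atTop, (1 + 1 / (m : ℝ)) ^ p ≤ y := by
  have h : Tendsto (fun m : ℕ => (1 + 1 / (m : ℝ)) ^ p) atTop (𝓝 1) := by
    simpa only [add_zero, one_pow] using
      (tendsto_one_div_atTop_nhds_zero_nat.const_add (1 : ℝ)).pow p
  exact h.eventually_le_const hy

end Asymptotics

section Ratio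

variable {a b r : ℝ} {k n : ℕ} {S : ℝ → ℝ}

theorem upsstar_pos (hab : a < b) (hk : 0 < k) (hρ : 0 < r / Jfun a b S) :
    0 < upsstar a b k r S := by
  have : 0 < b - a := sub_pos.2 hab
  have := Ak_pos hab hk
  unfold upsstar
  positivity

theorem upsn_le_mul_upsstar (hab : a < b) (hk : 0 < k) (hn : 1 < n) (hρ : 0 < r / Jfun a b S)
    (hωn : pinskerOmega a b k (ttilde a b r n S) n ≤ n) :
    upsn a b k r n S ≤
      (1 + 1 / (pinskerJ0 a b k (ttilde a b r n S) n : ℝ)) ^ (2 * k) * upsstar a b k r S := by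
  have : 0 < b - a := sub_pos.2 hab
  have hA := Ak_pos hab hk
  have hn_pos : 0 < (n : ℝ) := by exact_mod_cast zero_lt_one.trans hn
  have hρt := div_Jfun_le_ttilde hn hρ
  unfold upsn upsstar
  set t := ttilde a b r n S
  set ρ := r / Jfun a b S
  set κ : ℝ := (1 + 1 / (pinskerJ0 a b k t n : ℝ)) ^ (2 * k)
  set B : ℝ := ((b - a) / Real.pi) ^ (2 * k)
  have ht : 0 < t := hρ.trans_le hρt
  have hω := pinskerOmega_pos hab hk ht (zero_lt_one.trans hn)
  calc _ ≤ (n : ℝ) ^ (2 * (k : ℝ) / (2 * k + 1)) * (κ * B / pinskerOmega a b k t n ^ (2 * k)) := by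
        gcongr
        exact ciSup_le fun j => sq_one_sub_pinskerWeight_div_varpi_le hab hω hωn j.2
    _ = (n : ℝ) ^ (2 * (k : ℝ) / (2 * k + 1)) *
          (κ * B / (Ak a b k * t * n) ^ (2 * (k : ℝ) / (2 * k + 1))) := by
        rw [pinskerOmega_pow_two_mul (by positivity)]
    _ ≤ (n : ℝ) ^ (2 * (k : ℝ) / (2 * k + 1)) *
          (κ * B / (Ak a b k * ρ * n) ^ (2 * (k : ℝ) / (2 * k + 1))) := by gcongr
    _ = κ * (B * (Ak a b k * ρ) ^ (-(2 * (k : ℝ)) / (2 * k + 1))) := by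
        rw [neg_div, Real.rpow_neg (by positivity), Real.mul_rpow (by positivity) hn_pos.le]
        field_simp

theorem eventually_forall_upsn_div_upsstar_le (hab : a < b) (hk : 0 < k) (hr : 0 < r) {c : ℝ}
    (hc : 0 < c) {y : ℝ} (hy : 1 < y) :
    ∀ᶠ n : ℕ in atTop, ∀ S, c ≤ Jfun a b S → upsn a b k r n S / upsstar a b k r S ≤ y := by
  obtain ⟨M, hM⟩ := eventually_atTop.1 (eventually_one_add_one_div_pow_le hy (2 * k))
  filter_upwards [eventually_gt_atTop 1, tendsto_epsn.eventually_le_const zero_lt_one,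
    eventually_forall_pinskerOmega_le hab hk (r / c + 1),
    (tendsto_pinskerJ0_epsn hab hk).eventually_ge_atTop M] with n hn hε1 hω hMj S hcJ
  have hJ : 0 < Jfun a b S := hc.trans_le hcJ
  have hρ : 0 < r / Jfun a b S := div_pos hr hJ
  have hε := epsn_pos hn
  have hεt := epsn_le_ttilde hn hρ
  have ht_le : ttilde a b r n S ≤ r / c + 1 :=
    calc ttilde a b r n S ≤ r / Jfun a b S + epsn n := ttilde_le_add hn hρ
      _ ≤ r / c + 1 := by gcongr
  have hstar : 0 < upsstar a b k r S := upsstar_pos hab hk hρ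
  rw [div_le_iff₀ hstar]
  refine (upsn_le_mul_upsstar hab hk hn hρ (hω _ (hε.le.trans hεt) ht_le)).trans ?_
  gcongr
  exact hM _ (hMj.trans (pinskerJ0_mono hab hk hε.le hεt))

end Ratio

theorem stmt8_general {L a b : ℝ} (hL : 0 < L) (hab : a < b) {k : ℕ} (hk : 0 < k) {r : ℝ}
    (hr : 0 < r) {δ : ℝ} (hδ : 0 < δ) :
    ∀ᶠ n : ℕ in atTop, ∀ S : ℝ → ℝ, SigmaL L S →
      upsn a b k r n S / upsstar a b k r S ≤ 1 + δ := by
  have : 0 < b - a := sub_pos.2 hab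
  have hc : 0 < (b - a) * (Real.exp (-(4 * L)) / Real.exp (2 * L * (L + 1) ^ 2)) := by positivity
  filter_upwards [eventually_forall_upsn_div_upsstar_le hab hk hr hc (lt_add_of_pos_right 1 hδ)]
    with n hn S hS
  exact hn S (hS.le_Jfun hL hab.le)

/-- `limsup_{n→∞, n odd} sup_{S∈Σ_L} υ_n(S)/υ*(S) ≤ 1`. -/
theorem stmt8 (L a b : ℝ) (hL : 1 ≤ L) (hab : a < b) (hba : 1 ≤ b - a)
    (k : ℕ) (hk : 1 ≤ k) (r : ℝ) (hr : 0 < r) :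
    ∀ δ : ℝ, 0 < δ → ∃ N : ℕ, 3 ≤ N ∧ ∀ n : ℕ, N ≤ n → Odd n →
      ∀ S : ℝ → ℝ, SigmaL L S →
        upsn a b k r n S / upsstar a b k r S ≤ 1 + δ := by
  intro δ hδ
  obtain ⟨N, hN⟩ := eventually_atTop.1 (stmt8_general (zero_lt_one.trans_le hL) hab hk hr hδ)
  exact ⟨max 3 N, le_max_left _ _, fun n hn _ => hN n (le_of_max_le_right hn)⟩
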